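/- arXiv:1611.08470 — 4 statements merged into one kernel-verified Lean document; each statement's English description precedes it below -/
import Mathlib

section
/- Let n ≥ 1 and r ≥ 1 be integers. For every r-multipartition λ = (λ^{(1)},…,λ^{(r)}) of n, one has Σ_{i=1}^{r} ( r·|λ^{(i)}| − i·ℓ(λ^{(i)}) ) ≤ r·n − 1, where ℓ(μ) denotes the number of nonzero parts of the partition μ (equivalently, the first part of the transposed partition μᵗ); moreover equality holds if and only if λ^{(1)} is the one-row partition (n) and λ^{(i)} = ∅ for all i ≥ 2. -/
/-- For every `r`-multipartition `lam` of `n` (each `lam i` is a multiset of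
positive parts, sizes summing to `n`),
`∑_{i=1}^{r} (r·|lam^{(i)}| − i·ℓ(lam^{(i)})) ≤ r·n − 1`, with equality iff `lam^{(1)} = (n)`
and all other components are empty. -/
theorem multipartition_top_exponent (n r : ℕ) (hn : 1 ≤ n) (hr : 0 < r)
    (lam : Fin r → Multiset ℕ)
    (hpos : ∀ i : Fin r, ∀ x ∈ lam i, 0 < x)
    (hsize : ∑ i : Fin r, (lam i).sum = n) :
    (∑ i : Fin r, ((r : ℤ) * ((lam i).sum : ℤ) - (((i : ℕ) : ℤ) + 1) * ((lam i).card : ℤ)))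
        ≤ (r : ℤ) * (n : ℤ) - 1 ∧
    ((∑ i : Fin r, ((r : ℤ) * ((lam i).sum : ℤ) - (((i : ℕ) : ℤ) + 1) * ((lam i).card : ℤ)))
        = (r : ℤ) * (n : ℤ) - 1 ↔
      (lam ⟨0, hr⟩ = {n} ∧ ∀ i : Fin r, 1 ≤ (i : ℕ) → lam i = 0)) := by
  have key : (∑ i : Fin r, ((r : ℤ) * ((lam i).sum : ℤ)
      - (((i : ℕ) : ℤ) + 1) * ((lam i).card : ℤ)))
      = (r : ℤ) * (n : ℤ) - ((∑ i : Fin r, ((i : ℕ) + 1) * (lam i).card : ℕ) : ℤ) := by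
    rw [Finset.sum_sub_distrib, ← Finset.mul_sum, ← hsize]
    push_cast
    rfl
  rw [key]
  have hle : ∀ i : Fin r, ((i : ℕ) + 1) * (lam i).card
      ≤ ∑ i : Fin r, ((i : ℕ) + 1) * (lam i).card := fun i =>
    Finset.single_le_sum (f := fun i : Fin r => ((i : ℕ) + 1) * (lam i).card)
      (fun _ _ => Nat.zero_le _) (Finset.mem_univ i)
  have hsingle : (∀ i : Fin r, 1 ≤ (i : ℕ) → lam i = 0) →
      (∑ i : Fin r, ((i : ℕ) + 1) * (lam i).card) = (lam ⟨0, hr⟩).card ∧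
      n = (lam ⟨0, hr⟩).sum := by
    intro h
    have h' : ∀ i : Fin r, i ≠ ⟨0, hr⟩ → lam i = 0 := by
      intro i hi
      apply h
      by_contra hc
      exact hi (Fin.ext (by simp; omega))
    constructor
    · rw [Finset.sum_eq_single ⟨0, hr⟩]
      · simp
      · intro i _ hi
        simp [h' i hi]
      · simp
    · rw [← hsize, Finset.sum_eq_single ⟨0, hr⟩]
      · intro i _ hi
        simp [h' i hi]
      · simp
  have hS : 1 ≤ ∑ i : Fin r, ((i : ℕ) + 1) * (lam i).card := by
    by_contra hc
    have h0 : ∀ i : Fin r, lam i = 0 := by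
      intro i
      have := hle i
      rw [← Multiset.card_eq_zero]
      nlinarith
    simp [h0] at hsize
    omega
  generalize (∑ i : Fin r, ((i : ℕ) + 1) * (lam i).card) = S at *
  refine ⟨by omega, ?_, ?_⟩
  · intro h
    have h1 : S = 1 := by omega
    have hz : ∀ i : Fin r, 1 ≤ (i : ℕ) → lam i = 0 := by
      intro i hi
      have := hle i
      rw [← Multiset.card_eq_zero]
      nlinarith
    obtain ⟨hc, hs⟩ := hsingle hz
    refine ⟨?_, hz⟩
    obtain ⟨a, ha⟩ := Multiset.card_eq_one.1 (hc.symm.trans h1)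
    rw [ha] at hs ⊢
    simp at hs
    rw [hs]
  · rintro ⟨h0, hz⟩
    obtain ⟨hc, -⟩ := hsingle hz
    rw [h0] at hc
    simp at hc
    omega
end

section
/- Let k be a field, let A and B be k-vector spaces, let J ⊆ A be a subspace, and let I₁, I₂ ⊆ B be subspaces. Inside the tensor product B ⊗ A (writing U ⊗ V for the image in B ⊗ A of the tensor product of subspaces U ⊆ B and V ⊆ A under the map induced by the inclusions), one has the identity (B ⊗ J + I₁ ⊗ A) ∩ (I₂ ⊗ A) = I₂ ⊗ J + (I₁ ∩ I₂) ⊗ A. -/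
open scoped TensorProduct

/-- The image of `U ⊗ V` in `B ⊗[k] A`, for subspaces `U ⊆ B`, `V ⊆ A`. -/
noncomputable def tensorImage {k B A : Type*} [Field k]
    [AddCommGroup B] [Module k B] [AddCommGroup A] [Module k A]
    (U : Submodule k B) (V : Submodule k A) : Submodule k (B ⊗[k] A) :=
  LinearMap.range (TensorProduct.map U.subtype V.subtype)

theorem tensorImage_eq_aux {k B A : Type*} [Field k]
    [AddCommGroup B] [Module k B] [AddCommGroup A] [Module k A]
    (U : Submodule k B) (V : Submodule k A) :
    tensorImage U V = Submodule.map₂ (TensorProduct.mk k B A) U V :=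
  TensorProduct.range_mapIncl U V

theorem tensorImage_mono_aux {k B A : Type*} [Field k]
    [AddCommGroup B] [Module k B] [AddCommGroup A] [Module k A]
    {U U' : Submodule k B} {V V' : Submodule k A} (hU : U ≤ U') (hV : V ≤ V') :
    tensorImage U V ≤ tensorImage U' V' := by
  rw [tensorImage_eq_aux, tensorImage_eq_aux]
  exact Submodule.map₂_le_map₂ hU hV

theorem tensorImage_proj_aux {k B A : Type*} [Field k]
    [AddCommGroup B] [Module k B] [AddCommGroup A] [Module k A]
    (P : B →ₗ[k] B) {U U' : Submodule k B} (V : Submodule k A)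
    (h : ∀ u ∈ U, P u ∈ U') :
    tensorImage U V ≤ (tensorImage U' V).comap (P.rTensor A) := by
  rw [tensorImage_eq_aux, tensorImage_eq_aux, Submodule.map₂_le]
  intro u hu v hv
  exact Submodule.apply_mem_map₂ (TensorProduct.mk k B A) (h u hu) hv

theorem exists_proj_aux {k B : Type*} [Field k] [AddCommGroup B] [Module k B]
    (I₁ I₂ : Submodule k B) :
    ∃ P : B →ₗ[k] B, (∀ b, P b ∈ I₂) ∧ (∀ b ∈ I₂, P b = b) ∧ ∀ b ∈ I₁, P b ∈ I₁ ⊓ I₂ := by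
  obtain ⟨D, hD⟩ := exists_isCompl (I₁ ⊓ I₂)
  have hdis : Disjoint I₂ (I₁ ⊓ D) := by
    rw [disjoint_iff, ← inf_assoc, inf_comm I₂ I₁]
    exact hD.inf_eq_bot
  obtain ⟨C, hDC, hC⟩ := hdis.symm.exists_isCompl
  have hC := hC.symm
  have hI : I₁ = (I₁ ⊓ I₂) ⊔ (I₁ ⊓ D) := by
    rw [inf_comm I₁ D, ← sup_inf_assoc_of_le D (inf_le_left : I₁ ⊓ I₂ ≤ I₁), hD.sup_eq_top,
      top_inf_eq]
  have h2 : ∀ b ∈ I₂, I₂.projection C hC b = b := fun b hb =>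
    Submodule.projection_apply_left hC ⟨b, hb⟩
  refine ⟨I₂.projection C hC, fun b => Submodule.projection_apply_mem hC b, h2, ?_⟩
  intro b hb
  rw [hI] at hb
  obtain ⟨x, hx, y, hy, rfl⟩ := Submodule.mem_sup.1 hb
  rw [map_add, h2 x hx.2, (Submodule.projection_apply_eq_zero_iff hC).2 (hDC hy), add_zero]
  exact hx

/-- `(B ⊗ J + I₁ ⊗ A) ∩ (I₂ ⊗ A) = I₂ ⊗ J + (I₁ ∩ I₂) ⊗ A` inside `B ⊗[k] A`. -/
theorem tensor_subspace_modular_identity {k B A : Type*} [Field k]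
    [AddCommGroup B] [Module k B] [AddCommGroup A] [Module k A]
    (J : Submodule k A) (I₁ I₂ : Submodule k B) :
    (tensorImage (⊤ : Submodule k B) J ⊔ tensorImage I₁ (⊤ : Submodule k A))
        ⊓ tensorImage I₂ (⊤ : Submodule k A)
      = tensorImage I₂ J ⊔ tensorImage (I₁ ⊓ I₂) (⊤ : Submodule k A) := by
  apply le_antisymm
  · rintro x ⟨hx, hx2⟩
    obtain ⟨P, hP, hP2, hP1⟩ := exists_proj_aux I₁ I₂
    have hfix : P.rTensor A x = x := by
      have : tensorImage I₂ (⊤ : Submodule k A) ≤ LinearMap.eqLocus (P.rTensor A) LinearMap.id := by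
        rw [tensorImage_eq_aux, Submodule.map₂_le]
        intro u hu v _
        simp [LinearMap.mem_eqLocus, hP2 u hu]
      exact this hx2
    rw [← hfix]
    have : tensorImage (⊤ : Submodule k B) J ⊔ tensorImage I₁ (⊤ : Submodule k A) ≤
        (tensorImage I₂ J ⊔ tensorImage (I₁ ⊓ I₂) (⊤ : Submodule k A)).comap (P.rTensor A) :=
      sup_le
        ((tensorImage_proj_aux P J fun u _ => hP u).trans (Submodule.comap_mono le_sup_left))
        ((tensorImage_proj_aux P ⊤ hP1).trans (Submodule.comap_mono le_sup_right))
    exact this hx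
  · refine sup_le (le_inf ?_ ?_) (le_inf ?_ ?_)
    · exact (tensorImage_mono_aux le_top le_rfl).trans le_sup_left
    · exact tensorImage_mono_aux le_rfl le_top
    · exact (tensorImage_mono_aux inf_le_left le_rfl).trans le_sup_right
    · exact tensorImage_mono_aux inf_le_right le_rfl
end

section
/- Fix an integer m ≥ 1 and a partition τ (viewed as a weakly decreasing finitely supported function j ↦ τ_j from the positive integers to the nonnegative integers). Call a pair (τ′, τ″) of partitions an m-division of τ if τ_j = m·τ′_j + τ″_j for every j. Then among all m-divisions of τ there exists a pair (τ′, τ″) whose quotient size |τ′| = Σ_j τ′_j is maximal, and this maximizing pair is unique: if (σ′, σ″) is any m-division of τ with |σ′| ≥ |ρ′| for every m-division (ρ′, ρ″) of τ, then σ′ = τ′ and σ″ = τ″. -/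
/-- A partition, viewed as a weakly decreasing finitely supported function from the
positive integers to the nonnegative integers. -/
def IsPartitionFun (τ : ℕ+ → ℕ) : Prop :=
  Antitone τ ∧ (Function.support τ).Finite

/-- The size of a partition-function: the sum of its values. -/
noncomputable def partSize (τ : ℕ+ → ℕ) : ℕ := ∑ᶠ j, τ j

/-- `(τ', τ'')` is an `m`-division of `τ` if both are partitions and
`τ_j = m·τ'_j + τ''_j` for all `j`. -/
def IsMDivision (m : ℕ) (τ τ' τ'' : ℕ+ → ℕ) : Prop :=
  IsPartitionFun τ' ∧ IsPartitionFun τ'' ∧ ∀ j, τ j = m * τ' j + τ'' j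

theorem pnat_antitone_of_succ (f : ℕ+ → ℕ) (h : ∀ j, f (j + 1) ≤ f j) : Antitone f := by
  intro a b hab
  induction b using PNat.recOn with
  | one => rw [le_antisymm hab (one_le)]
  | succ n ih =>
    rcases hab.lt_or_eq with h1 | h1
    · exact (h n).trans (ih (PNat.lt_add_one_iff.mp h1))
    · rw [h1]

theorem pnat_down_induction (P : ℕ+ → Prop) (N : ℕ) (h0 : ∀ j : ℕ+, N ≤ j → P j)
    (h1 : ∀ j, P (j + 1) → P j) (j : ℕ+) : P j := by
  have key : ∀ k : ℕ, ∀ j : ℕ+, N ≤ j + k → P j := by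
    intro k
    induction k with
    | zero => exact fun j hj => h0 j hj
    | succ k ih =>
      intro j hj
      apply h1
      apply ih
      rw [PNat.add_coe, PNat.one_coe]
      omega
  exact key N j (by omega)

theorem eventually_zero (τ : ℕ+ → ℕ) (h : (Function.support τ).Finite) :
    ∃ N : ℕ, ∀ j : ℕ+, N ≤ j → τ j = 0 := by
  obtain ⟨B, hB⟩ := h.bddAbove
  refine ⟨B + 1, fun j hj => ?_⟩
  by_contra hne
  have h2 : j ≤ B := hB hne
  have h3 : (j : ℕ) ≤ B := h2
  omega

theorem exists_quotient (m : ℕ) (τ : ℕ+ → ℕ) (N : ℕ) (hN : ∀ j : ℕ+, N ≤ j → τ j = 0) :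
    ∃ q : ℕ+ → ℕ, (∀ j : ℕ+, N ≤ j → q j = 0) ∧
      ∀ j, q j = (τ j - τ (j + 1)) / m + q (j + 1) := by
  let d : ℕ → ℕ := fun i => (τ i.toPNat' - τ (i.toPNat' + 1)) / m
  refine ⟨fun j => ∑ i ∈ Finset.Ico (j : ℕ) N, d i, fun j hj => ?_, fun j => ?_⟩
  · simp [Finset.Ico_eq_empty_of_le hj]
  · have hd : d j = (τ j - τ (j + 1)) / m := by simp [d]
    rw [← hd]
    rcases lt_or_ge (j : ℕ) N with h | h
    · simp only [PNat.add_coe, PNat.one_coe]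
      exact Finset.sum_eq_sum_Ico_succ_bot h d
    · have h2 : N ≤ ((j + 1 : ℕ+) : ℕ) := by rw [PNat.add_coe]; omega
      show ∑ i ∈ Finset.Ico (j : ℕ) N, d i = d j + ∑ i ∈ Finset.Ico ((j + 1 : ℕ+) : ℕ) N, d i
      rw [Finset.Ico_eq_empty_of_le h, Finset.Ico_eq_empty_of_le h2, hd, hN j h]
      simp

/-- among all `m`-divisions of a partition `τ` there is one whose quotient has
maximal size, and the maximizing pair is unique. -/
theorem exists_unique_maximal_m_division (m : ℕ) (hm : 1 ≤ m)
    (τ : ℕ+ → ℕ) (hτ : IsPartitionFun τ) :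
    ∃ τ' τ'' : ℕ+ → ℕ, IsMDivision m τ τ' τ'' ∧
      (∀ ρ' ρ'' : ℕ+ → ℕ, IsMDivision m τ ρ' ρ'' → partSize ρ' ≤ partSize τ') ∧
      (∀ σ' σ'' : ℕ+ → ℕ, IsMDivision m τ σ' σ'' →
        (∀ ρ' ρ'' : ℕ+ → ℕ, IsMDivision m τ ρ' ρ'' → partSize ρ' ≤ partSize σ') →
        σ' = τ' ∧ σ'' = τ'') := by
  obtain ⟨hanti, hfin⟩ := hτ
  obtain ⟨N, hN⟩ := eventually_zero τ hfin
  obtain ⟨q, hq0, hq⟩ := exists_quotient m τ N hN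
  have hs : ∀ j, τ (j + 1) ≤ τ j := fun j => hanti (PNat.lt_add_right j 1).le
  have hstep : ∀ j, m * q j + τ (j + 1) ≤ m * q (j + 1) + τ j := by
    intro j
    have h1 := Nat.mul_div_le (τ j - τ (j + 1)) m
    have h2 := hs j
    rw [hq j, mul_add]
    omega
  have hle : ∀ j, m * q j ≤ τ j := by
    refine pnat_down_induction _ N (fun j hj => by simp [hq0 j hj]) (fun j ih => ?_)
    have := hstep j
    omega
  have hqfin : (Function.support q).Finite := by
    refine hfin.subset fun j hj h0 => hj ?_
    have h1 := hle j
    have h2 : q j ≤ m * q j := Nat.le_mul_of_pos_left _ hm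
    omega
  have hdiv : IsMDivision m τ q (fun j => τ j - m * q j) := by
    refine ⟨⟨pnat_antitone_of_succ q fun j => ?_, hqfin⟩,
      ⟨pnat_antitone_of_succ _ fun j => ?_, ?_⟩, fun j => ?_⟩
    · rw [hq j]; exact Nat.le_add_left _ _
    · have := hstep j
      have := hle j
      have := hle (j + 1)
      show τ (j + 1) - m * q (j + 1) ≤ τ j - m * q j
      omega
    · refine hfin.subset fun j hj h0 => hj ?_
      simp [h0]
    · have := hle j
      show τ j = m * q j + (τ j - m * q j)
      omega
  have hdom : ∀ ρ' ρ'' : ℕ+ → ℕ, IsMDivision m τ ρ' ρ'' → ∀ j, ρ' j ≤ q j := by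
    rintro ρ' ρ'' ⟨-, ⟨h2, -⟩, h3⟩
    refine pnat_down_induction _ N (fun j hj => ?_) (fun j ih => ?_)
    · have h4 := h3 j
      rw [hN j hj] at h4
      have h5 : ρ' j ≤ m * ρ' j := Nat.le_mul_of_pos_left _ hm
      omega
    · have h4 := h3 j
      have h5 := h3 (j + 1)
      have h6 : ρ'' (j + 1) ≤ ρ'' j := h2 (PNat.lt_add_right j 1).le
      have h7 : ρ' j - ρ' (j + 1) ≤ (τ j - τ (j + 1)) / m := by
        rw [Nat.le_div_iff_mul_le hm, Nat.sub_mul, mul_comm _ m, mul_comm _ m]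
        omega
      rw [hq j]
      omega
  refine ⟨q, _, hdiv, fun ρ' ρ'' h => ?_, fun σ' σ'' h hmax => ?_⟩
  · exact finsum_le_finsum' h.1.2 hqfin (hdom ρ' ρ'' h)
  · have hle' := hdom σ' σ'' h
    have hsz := hmax _ _ hdiv
    have heq : σ' = q := by
      have hS : Function.support σ' ⊆ (hqfin.toFinset : Set ℕ+) := by
        intro j hj
        have h1 := hle' j
        have h2 : σ' j ≠ 0 := hj
        simp only [Set.Finite.coe_toFinset, Function.mem_support]
        omega
      have hQ : Function.support q ⊆ (hqfin.toFinset : Set ℕ+) := by simp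
      unfold partSize at hsz
      rw [finsum_eq_sum_of_support_subset _ hS, finsum_eq_sum_of_support_subset _ hQ] at hsz
      have hall := (Finset.sum_eq_sum_iff_of_le (fun j _ => hle' j)).mp
        (le_antisymm (Finset.sum_le_sum fun j _ => hle' j) hsz)
      funext j
      by_cases hj : q j = 0
      · have := hle' j
        omega
      · exact hall j (by simpa using hj)
    refine ⟨heq, ?_⟩
    funext j
    have := h.2.2 j
    rw [heq] at this
    show σ'' j = τ j - m * q j
    omega
end

section
/- Let k be a field, V a k-vector space, W ⊆ V a subspace, and n ≥ 1 an integer. Inside the n-fold tensor power V^{⊗n}, for each i ∈ {1,…,n} let W_i denote the image of V ⊗ … ⊗ W ⊗ … ⊗ V (with W in the i-th slot), and for a subset Λ ⊆ {1,…,n} let W_Λ := Σ_{i∈Λ} W_i and let W^Λ denote the image of the tensor product whose i-th factor is W for i ∈ Λ and V for i ∉ Λ. Then for every finite family Λ₁,…,Λ_p of subsets of {1,…,n}, one has ⋂_{j=1}^{p} W_{Λ_j} = Σ_{Λ'} W^{Λ'}, where the sum on the right runs over all subsets Λ' ⊆ {1,…,n} satisfying Λ' ∩ Λ_j ≠ ∅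 for every j = 1,…,p. -/
open scoped TensorProduct

/-- The image in `V^{⊗n}` of the tensor product of the subspaces `U i ⊆ V`. -/
noncomputable def piTensorImage {k V : Type*} [Field k] [AddCommGroup V] [Module k V]
    {n : ℕ} (U : Fin n → Submodule k V) : Submodule k (⨂[k] _ : Fin n, V) :=
  LinearMap.range (PiTensorProduct.map fun i => (U i).subtype)

theorem tprod_mem_piTensorImage {k V : Type*} [Field k] [AddCommGroup V] [Module k V]
    {n : ℕ} (U : Fin n → Submodule k V) (v : Fin n → V) (hv : ∀ i, v i ∈ U i) :
    PiTensorProduct.tprod k v ∈ piTensorImage U := by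
  refine ⟨PiTensorProduct.tprod k (fun i => (⟨v i, hv i⟩ : U i)), ?_⟩
  rw [PiTensorProduct.map_tprod]
  rfl

theorem piTensorImage_le {k V : Type*} [Field k] [AddCommGroup V] [Module k V]
    {n : ℕ} (U : Fin n → Submodule k V) (N : Submodule k (⨂[k] _ : Fin n, V))
    (h : ∀ v : Fin n → V, (∀ i, v i ∈ U i) → PiTensorProduct.tprod k v ∈ N) :
    piTensorImage U ≤ N := by
  rintro _ ⟨x, rfl⟩
  induction x using PiTensorProduct.induction_on with
  | smul_tprod r v =>
    rw [map_smul, PiTensorProduct.map_tprod]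
    exact N.smul_mem _ (h _ fun i => (v i).2)
  | add x y hx hy =>
    rw [map_add]
    exact N.add_mem hx hy

theorem exists_adapted_basis.{u} {k : Type*} {V : Type u} [Field k] [AddCommGroup V] [Module k V]
    (W : Submodule k V) : ∃ (κ : Type u) (S : Set κ) (b : Module.Basis κ k V),
      (∀ c ∈ S, b c ∈ W) ∧ ∀ w ∈ W, ∀ c, c ∉ S → b.repr w c = 0 := by
  obtain ⟨C, hC⟩ := W.exists_isCompl
  let e := Submodule.prodEquivOfIsCompl W C hC
  let bW := Module.Basis.ofVectorSpace k W
  let bC := Module.Basis.ofVectorSpace k C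
  refine ⟨_, Set.range Sum.inl, (bW.prod bC).map e, ?_, ?_⟩
  · rintro _ ⟨c, rfl⟩
    simp [e]
  · intro w hw c hc
    rcases c with c | c
    · exact absurd ⟨c, rfl⟩ hc
    · have : e.symm w = (⟨w, hw⟩, 0) := by
        rw [LinearEquiv.symm_apply_eq]
        simp [e]
      simp [this]

/-- inside `V^{⊗n}`, with `W_i` the image of the tensor product having `W` in
the `i`-th slot and `V` elsewhere, and `W^{Λ'}` the image of the tensor product with `W`
exactly in the slots of `Λ'`, one has
`⋂_j (Σ_{i ∈ Λ_j} W_i) = Σ_{Λ' transversal to all Λ_j} W^{Λ'}`. -/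
theorem inf_sum_eq_sup_transversal {k V : Type*} [Field k] [AddCommGroup V] [Module k V]
    (n : ℕ) (hn : 1 ≤ n) (W : Submodule k V)
    (p : ℕ) (Λ : Fin p → Finset (Fin n)) :
    (⨅ j : Fin p, ⨆ i ∈ Λ j,
        piTensorImage (fun l : Fin n => if l = i then W else (⊤ : Submodule k V)))
      = ⨆ Λ' ∈ {Λ' : Finset (Fin n) | ∀ j : Fin p, (Λ' ∩ Λ j).Nonempty},
          piTensorImage (fun l : Fin n => if l ∈ Λ' then W else (⊤ : Submodule k V)) := by
  classical
  apply le_antisymm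
  · intro x hx
    obtain ⟨κ, S, b, hS, hW⟩ := exists_adapted_basis W
    let B := Basis.piTensorProduct (fun _ : Fin n => b)
    have key : ∀ q : Fin n → κ, B.repr x q ≠ 0 → ∀ j, ∃ i ∈ Λ j, q i ∈ S := by
      intro q hq j
      by_contra! hcon
      apply hq
      have hxj := (Submodule.mem_iInf _).1 hx j
      have hle : (⨆ i ∈ Λ j, piTensorImage
          (fun l : Fin n => if l = i then W else (⊤ : Submodule k V)))
          ≤ LinearMap.ker (B.coord q) := by
        refine iSup₂_le fun i hi => piTensorImage_le _ _ fun v hv => ?_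
        rw [LinearMap.mem_ker, Module.Basis.coord_apply,
          Basis.piTensorProduct_repr_tprod_apply]
        refine Finset.prod_eq_zero (Finset.mem_univ i) (hW _ ?_ _ (hcon i hi))
        simpa using hv i
      exact hle hxj
    rw [← B.linearCombination_repr x, Finsupp.linearCombination_apply]
    refine Submodule.sum_mem _ fun q hq => Submodule.smul_mem _ _ ?_
    have hq' := key q (Finsupp.mem_support_iff.1 hq)
    refine Submodule.mem_iSup_of_mem (Finset.univ.filter fun i => q i ∈ S)
      (Submodule.mem_iSup_of_mem ?_ ?_)
    · intro j
      obtain ⟨i, hi, hqi⟩ := hq' j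
      exact ⟨i, by simp [hi, hqi]⟩
    · rw [Basis.piTensorProduct_apply]
      refine tprod_mem_piTensorImage _ _ fun i => ?_
      by_cases h : q i ∈ S
      · simpa [h] using hS _ h
      · simp [h]
  · refine iSup₂_le fun Λ' hΛ' => le_iInf fun j => ?_
    obtain ⟨i, hi⟩ := hΛ' j
    rw [Finset.mem_inter] at hi
    refine piTensorImage_le _ _ fun v hv => Submodule.mem_iSup_of_mem i
      (Submodule.mem_iSup_of_mem hi.2 (tprod_mem_piTensorImage _ _ fun l => ?_))
    by_cases h : l = i
    · subst h
      simpa [hi.1] using hv l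
    · simp [h]
end
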